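/- arXiv:1603.00011 — 2 statements merged into one kernel-verified Lean document; each statement's English description precedes it below -/
import Mathlib

section
/- Let n ≥ 4 and let (k_1,ℓ_1), (k_2,ℓ_2), …, (k_{n−2},ℓ_{n−2}) be pairs of positive integers with n−1 ≥ k_1 > k_2 > … > k_{n−2} ≥ 2 and ℓ_1 = 2 < ℓ_2 < … < ℓ_{n−2}. Then there exists a strongly stable ideal I ⊊ S = K[x_1,…,x_n] of initial degree 2 whose set of corners is exactly {(k_1,ℓ_1),…,(k_{n−2},ℓ_{n−2})} if and only if k_1 + 1 = n. -/
namespace ExtremalBetti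

/-- A monomial of `K[x_1,…,x_n]`, identified with its exponent vector in `ℕ^n`. -/
abbrev Mon (n : ℕ) := Fin n → ℕ

/-- The degree of a monomial. -/
def degree {n : ℕ} (u : Mon n) : ℕ := ∑ i, u i

/-- `m(u)`: the (1-based) index of the largest variable dividing `u`; `m(1) = 0`. -/
def maxVar {n : ℕ} (u : Mon n) : ℕ :=
  (Finset.univ.filter (fun i : Fin n => u i ≠ 0)).sup (fun i => (i : ℕ) + 1)

/-- The exponent vector of the variable `x_q` (1-based index `q`). -/
def X (n q : ℕ) : Mon n := fun i => if (i : ℕ) + 1 = q then 1 else 0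

/-- `lexLT u v` : `v` is strictly lex-greater than `u` (lex order induced by
`x_1 > x_2 > … > x_n`). -/
def lexLT {n : ℕ} (u v : Mon n) : Prop :=
  ∃ i : Fin n, (∀ j : Fin n, j < i → u j = v j) ∧ u i < v i

/-- `lexLE u v` : `v ≥_lex u`. -/
def lexLE {n : ℕ} (u v : Mon n) : Prop := u = v ∨ lexLT u v

/-- `L(top, bot)` in degree `d`: monomials `z` of degree `d` with `top ≥_lex z ≥_lex bot`. -/
def Lset {n : ℕ} (d : ℕ) (top bot : Mon n) : Set (Mon n) :=
  {z | degree z = d ∧ lexLE z top ∧ lexLE bot z}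

/-- `A(k,d)`: monomials of degree `d` with `m(u) = k+1`. -/
def A (n k d : ℕ) : Set (Mon n) := {u | degree u = d ∧ maxVar u = k + 1}

/-- The shadow of a set of monomials. -/
def shad {n : ℕ} (Ms : Set (Mon n)) : Set (Mon n) :=
  {z | ∃ u ∈ Ms, ∃ i : Fin n, z = u + Pi.single i 1}

/-- The `t`-fold iterated shadow. -/
def shadIter {n : ℕ} : ℕ → Set (Mon n) → Set (Mon n)
  | 0, Ms => Ms
  | t + 1, Ms => shad (shadIter t Ms)

/-- The lexicographic shadow `LexShad^t(𝔐) = L(x_1^{d+t}, w x_n^t)`, where `w` is the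
lex-smallest element of `𝔐` (empty if `𝔐` is empty or has no lex-smallest element). -/
def lexShad {n : ℕ} (t : ℕ) (Ms : Set (Mon n)) : Set (Mon n) :=
  {z | ∃ w ∈ Ms, (∀ v ∈ Ms, lexLE w v) ∧
      z ∈ Lset (degree w + t) ((degree w + t) • X n 1) (w + t • X n n)}

/-- A set of monomials is a monomial ideal iff it is upward closed under divisibility. -/
def IsMonIdeal {n : ℕ} (I : Set (Mon n)) : Prop :=
  ∀ u ∈ I, ∀ v : Mon n, (∀ i, u i ≤ v i) → v ∈ I

/-- `G(I)`: the minimal monomial generators of `I`. -/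
def minGens {n : ℕ} (I : Set (Mon n)) : Set (Mon n) :=
  {u ∈ I | ∀ v ∈ I, (∀ i, v i ≤ u i) → v = u}

/-- `G(I)_d`: the minimal generators of degree `d`. -/
def gens {n : ℕ} (I : Set (Mon n)) (d : ℕ) : Set (Mon n) :=
  {u ∈ minGens I | degree u = d}

/-- `I` is a strongly stable (monomial) ideal with `I ⊊ S` (i.e. `1 ∉ I`):
for every minimal generator `u`, every `i` with `x_i ∣ u` and every `j < i`,
`(x_j u)/x_i ∈ I`. -/
def StronglyStable {n : ℕ} (I : Set (Mon n)) : Prop :=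
  IsMonIdeal I ∧ (0 : Mon n) ∉ I ∧
    ∀ u ∈ minGens I, ∀ i : Fin n, u i ≠ 0 →
      ∀ j : Fin n, j < i → (u - Pi.single i 1 + Pi.single j 1) ∈ I

/-- The initial degree `α(I)` of the monomial ideal `I` equals `d`. -/
def initialDegree {n : ℕ} (I : Set (Mon n)) (d : ℕ) : Prop :=
  (∃ u ∈ I, degree u = d) ∧ ∀ u ∈ I, d ≤ degree u

/-- `(k,ℓ)` is a corner of `I`: `k, ℓ ≥ 1`, `k + 1 = max{m(u) : u ∈ G(I)_ℓ}`, and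
`m(u) ≤ k` for every `u ∈ G(I)_j` with `j > ℓ`. -/
def IsCorner {n : ℕ} (I : Set (Mon n)) (k ℓ : ℕ) : Prop :=
  1 ≤ k ∧ 1 ≤ ℓ ∧
  (∃ u ∈ gens I ℓ, maxVar u = k + 1) ∧
  (∀ u ∈ gens I ℓ, maxVar u ≤ k + 1) ∧
  (∀ j, ℓ < j → ∀ u ∈ gens I j, maxVar u ≤ k)

/-- The value of the corner `(k,ℓ)`: `|{u ∈ G(I)_ℓ : m(u) = k+1}|`. -/
noncomputable def cornerValue {n : ℕ} (I : Set (Mon n)) (k ℓ : ℕ) : ℕ :=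
  {u ∈ gens I ℓ | maxVar u = k + 1}.ncard

/-- The set of corners of `I`. -/
def corners {n : ℕ} (I : Set (Mon n)) : Set (ℕ × ℕ) :=
  {c | IsCorner I c.1 c.2}

/-- `(k,ℓ)` is a corner of the submodule `M = ⊕_j I_j e_j` of `S^m`. -/
def IsCornerMod {n m : ℕ} (I : Fin m → Set (Mon n)) (k ℓ : ℕ) : Prop :=
  1 ≤ k ∧ 1 ≤ ℓ ∧
  (∃ j, ∃ u ∈ gens (I j) ℓ, maxVar u = k + 1) ∧
  (∀ j, ∀ u ∈ gens (I j) ℓ, maxVar u ≤ k + 1) ∧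
  (∀ d, ℓ < d → ∀ j, ∀ u ∈ gens (I j) d, maxVar u ≤ k)

/-- The value of the corner `(k,ℓ)` of `M = ⊕_j I_j e_j`: the number of minimal
generators `u e_j` with `deg u = ℓ` and `m(u) = k+1`. -/
noncomputable def cornerValueMod {n m : ℕ} (I : Fin m → Set (Mon n)) (k ℓ : ℕ) : ℕ :=
  {p : Mon n × Fin m | p.1 ∈ gens (I p.2) ℓ ∧ maxVar p.1 = k + 1}.ncard

/-- The set of corners of the submodule `M = ⊕_j I_j e_j`. -/
def cornersMod {n m : ℕ} (I : Fin m → Set (Mon n)) : Set (ℕ × ℕ) :=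
  {c | IsCornerMod I c.1 c.2}

/-- `t = max{p : λ_p ≤ s − p}` (and `t = 0` if no such `p` exists). -/
def tVal (s : ℕ) (l : ℕ → ℕ) : ℕ :=
  ((Finset.Icc 1 s).filter (fun p => l p ≤ s - p)).sup id

/-- The associated sets `B_1, …, B_s` of the corner sequence
`(κ_1,λ_1), …, (κ_s,λ_s)` (given by `k, l : ℕ → ℕ` on indices `1,…,s`);
`B_0 = ∅`. -/
def assocB (n s : ℕ) (k l : ℕ → ℕ) (p : ℕ) : Set (Mon n) :=
  if p = 0 then ∅
  else if s = 1 then A n (k 1) (l 1)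
  else if p = s then {u ∈ A n (k s) (l s) | lexLE ((l s) • X n (k s + 1)) u}
  else if l 1 = 2 ∧ p = 1 then
    {u ∈ A n (k 1) 2 |
      lexLE (X n (if s = 2 then k 2 else k s - 1) + X n (k 1 + 1)) u}
  else if p ≤ tVal s l then
    {u ∈ A n (k p) (l p) |
      lexLE ((∑ j ∈ Finset.Icc (s - l p + 3) s, X n (k j)) +
          X n (k (s - l p + 2) - 1) + X n (k p + 1)) u}
  else
    {u ∈ A n (k p) (l p) |
      lexLE ((∑ j ∈ Finset.Icc (p + 1) s, X n (k j)) +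
          (l p - (s - p)) • X n (k p + 1)) u}

/-- The admissible bound `b_p = |B_p \ LexShad^{λ_p−λ_{p−1}}(B_{p−1})|` of the
`p`-th pair of the corner sequence. -/
noncomputable def admissibleBound (n s : ℕ) (k l : ℕ → ℕ) (p : ℕ) : ℕ :=
  (assocB n s k l p \ lexShad (l p - l (p - 1)) (assocB n s k l (p - 1))).ncard

/-!
A monomial `u` lies in the strongly stable ideal generated by `w` iff `u` dominates `w`: for every
`j`, the degree of `u` in `x_1, …, x_j` is at least that of `w`. For the strongly stable ideal
generated by a set `W`, every minimal generator `u` has the degree of some `w ∈ W` that it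
dominates, hence `m(u) ≤ m(w)`. So if the pairs `(m(w) - 1, deg w)` form an antichain and no element
of `W` dominates one of smaller degree, these pairs are the corners.

To a pair `(k, ℓ)` with `k, ℓ ≥ 2` attach the monomial `x_2 ⋯ x_{ℓ-1} · x_{ℓ-1} x_{k+1}` when
`ℓ ≤ k - 2`, and `x_2 ⋯ x_{k-1} · x_{k+1}^{ℓ-k+2}` otherwise. Comparing degrees in `x_1, …, x_j` for
a single well chosen `j` shows that no domination occurs, so every antichain of such pairs with
`k < n` is the set of corners of a strongly stable ideal. Finally, `n - 2` strictly decreasing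
integers in `[2, n - 1]` leave no choice but `k_1 = n - 1`.
-/

section PrefixDegree

variable {n : ℕ}

/-- The degree of `u` in the first `j` variables `x_1, …, x_j`; all of `degree u` when `j ≥ n`. -/
def prefixDegree (u : Mon n) (j : ℕ) : ℕ := ∑ i : Fin n with i.val < j, u i

lemma prefixDegree_add (u v : Mon n) (j : ℕ) :
    prefixDegree (u + v) j = prefixDegree u j + prefixDegree v j :=
  Finset.sum_add_distrib

lemma prefixDegree_nsmul (a : ℕ) (u : Mon n) (j : ℕ) :
    prefixDegree (a • u) j = a * prefixDegree u j :=
  (Finset.mul_sum _ _ _).symm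

lemma prefixDegree_sum {ι : Type*} (s : Finset ι) (u : ι → Mon n) (j : ℕ) :
    prefixDegree (∑ a ∈ s, u a) j = ∑ a ∈ s, prefixDegree (u a) j := by
  simp only [prefixDegree, Finset.sum_apply]
  exact Finset.sum_comm

lemma prefixDegree_single (i : Fin n) (j : ℕ) :
    prefixDegree (Pi.single i 1) j = if (i : ℕ) < j then 1 else 0 := by
  simp [prefixDegree, Pi.single_apply]

lemma prefixDegree_X {q : ℕ} (hq : 1 ≤ q) (hqn : q ≤ n) (j : ℕ) :
    prefixDegree (X n q) j = if q ≤ j then 1 else 0 := by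
  have hX : X n q = Pi.single ⟨q - 1, by omega⟩ 1 := by
    funext i
    simp only [X, Pi.single_apply, Fin.ext_iff]
    grind
  rw [hX, prefixDegree_single]
  grind

lemma prefixDegree_le_prefixDegree {u v : Mon n} (h : u ≤ v) (j : ℕ) :
    prefixDegree u j ≤ prefixDegree v j :=
  Finset.sum_le_sum fun i _ => h i

lemma prefixDegree_le_degree (u : Mon n) (j : ℕ) : prefixDegree u j ≤ degree u :=
  Finset.sum_le_sum_of_subset (Finset.filter_subset _ _)

lemma prefixDegree_self (u : Mon n) : prefixDegree u n = degree u := by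
  simp [prefixDegree, degree]

lemma maxVar_le_iff {u : Mon n} {j : ℕ} : maxVar u ≤ j ↔ ∀ i, u i ≠ 0 → (i : ℕ) < j := by
  simp [maxVar, Finset.sup_le_iff]

lemma prefixDegree_eq_degree_iff {u : Mon n} {j : ℕ} :
    prefixDegree u j = degree u ↔ maxVar u ≤ j := by
  have hsplit : degree u = prefixDegree u j + ∑ i : Fin n with ¬ i.val < j, u i :=
    (Finset.sum_filter_add_sum_filter_not _ _ _).symm
  rw [hsplit, left_eq_add, Finset.sum_eq_zero_iff, maxVar_le_iff]
  simp only [Finset.mem_filter_univ]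
  exact forall_congr' fun i => not_imp_comm

lemma degree_le_degree {u v : Mon n} (h : u ≤ v) : degree u ≤ degree v :=
  Finset.sum_le_sum fun i _ => h i

lemma eq_of_le_of_degree_le {u v : Mon n} (h : u ≤ v) (hdeg : degree v ≤ degree u) : u = v := by
  have heq : degree u = degree v := (degree_le_degree h).antisymm hdeg
  exact funext fun i => (Finset.sum_eq_sum_iff_of_le fun i _ => h i).1 heq i (Finset.mem_univ i)

lemma degree_eq_zero {u : Mon n} : degree u = 0 ↔ u = 0 := by
  simp [degree, funext_iff]

lemma single_one_le {u : Mon n} {i : Fin n} (h : u i ≠ 0) : Pi.single i 1 ≤ u :=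
  update_le_iff.2 ⟨Nat.one_le_iff_ne_zero.2 h, fun _ _ => Nat.zero_le _⟩

lemma exists_ne_zero_maxVar_eq {u : Mon n} (h : u ≠ 0) :
    ∃ i, u i ≠ 0 ∧ maxVar u = (i : ℕ) + 1 := by
  obtain ⟨i₀, hi₀⟩ := Function.ne_iff.1 h
  obtain ⟨i, hi, hsup⟩ := Finset.exists_mem_eq_sup (Finset.univ.filter fun i => u i ≠ 0)
    ⟨i₀, by simpa using hi₀⟩ (fun i : Fin n => (i : ℕ) + 1)
  exact ⟨i, by simpa using hi, hsup⟩

end PrefixDegree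

section BorelIdeal

variable {n : ℕ} {W : Set (Mon n)} {u w : Mon n}

/-- The Borel order: `u` is a multiple of a monomial obtained from `w` by moves replacing a variable
`x_i` by some `x_j` with `j < i`. The encoding compares the degrees in all initial sets of
variables, which makes the relation evidently transitive. -/
def BorelLE (w u : Mon n) : Prop := ∀ j, prefixDegree w j ≤ prefixDegree u j

/-- The strongly stable ideal generated by `W`, i.e. the smallest one containing `W`; the
elements of `W` are its Borel generators. -/
def borelIdeal (W : Set (Mon n)) : Set (Mon n) := {u | ∃ w ∈ W, BorelLE w u}

lemma BorelLE.of_le (h : w ≤ u) : BorelLE w u := prefixDegree_le_prefixDegree h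

lemma BorelLE.trans {v : Mon n} (hwu : BorelLE w u) (huv : BorelLE u v) : BorelLE w v :=
  fun j => (hwu j).trans (huv j)

lemma BorelLE.degree_le (h : BorelLE w u) : degree w ≤ degree u := by
  simpa only [prefixDegree_self] using h n

lemma BorelLE.maxVar_le (h : BorelLE w u) (hdeg : degree u = degree w) :
    maxVar u ≤ maxVar w := by
  have hw : prefixDegree w (maxVar w) = degree w := prefixDegree_eq_degree_iff.2 le_rfl
  refine prefixDegree_eq_degree_iff.1 ((prefixDegree_le_degree u _).antisymm ?_)
  rw [hdeg, ← hw]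
  exact h _

lemma borelLE_sub_single_add_single {i j : Fin n} (hi : u i ≠ 0) (hji : j < i) :
    BorelLE u (u - Pi.single i 1 + Pi.single j 1) := fun t => by
  have hu := congrArg (prefixDegree · t) (tsub_add_cancel_of_le (single_one_le hi))
  have : (j : ℕ) < i := hji
  simp only [prefixDegree_add, prefixDegree_single] at hu ⊢
  grind

/-- The variable to cancel is the last one dividing `u`. -/
lemma BorelLE.exists_lt (h : BorelLE w u) (hdeg : degree w < degree u) :
    ∃ v < u, BorelLE w v := by
  obtain ⟨i, hi, hmax⟩ : ∃ i, u i ≠ 0 ∧ maxVar u = (i : ℕ) + 1 :=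
    exists_ne_zero_maxVar_eq fun hu => by simp [degree_eq_zero.2 hu] at hdeg
  have hcancel := tsub_add_cancel_of_le (single_one_le hi)
  refine ⟨u - Pi.single i 1, lt_of_le_of_ne tsub_le_self fun heq => ?_, fun j => ?_⟩
  · have := congrFun heq i
    simp only [Pi.sub_apply, Pi.single_eq_same] at this
    omega
  · have hu := congrArg (prefixDegree · j) hcancel
    simp only [prefixDegree_add, prefixDegree_single] at hu
    have hwu := h j
    by_cases hij : (i : ℕ) < j
    · have hfull : prefixDegree u j = degree u := prefixDegree_eq_degree_iff.2 (by omega)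
      have := prefixDegree_le_degree w j
      rw [if_pos hij] at hu
      omega
    · rw [if_neg hij] at hu
      omega

lemma stronglyStable_borelIdeal (hW : 0 ∉ W) : StronglyStable (borelIdeal W) := by
  refine ⟨?_, ?_, ?_⟩
  · rintro u ⟨w, hw, hwu⟩ v huv
    exact ⟨w, hw, hwu.trans (.of_le huv)⟩
  · rintro ⟨w, hw, hw0⟩
    have hw_zero : w = 0 :=
      degree_eq_zero.1 (Nat.le_zero.1 (hw0.degree_le.trans_eq (degree_eq_zero.2 rfl)))
    exact hW (hw_zero ▸ hw)
  · rintro u ⟨⟨w, hw, hwu⟩, -⟩ i hi j hji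
    exact ⟨w, hw, hwu.trans (borelLE_sub_single_add_single hi hji)⟩

lemma initialDegree_borelIdeal {d : ℕ} (hd : IsLeast (degree '' W) d) :
    initialDegree (borelIdeal W) d := by
  obtain ⟨⟨w, hw, rfl⟩, hmin⟩ := hd
  refine ⟨⟨w, ⟨w, hw, .of_le le_rfl⟩, rfl⟩, ?_⟩
  rintro u ⟨v, hv, hvu⟩
  exact (hmin ⟨v, hv, rfl⟩).trans hvu.degree_le

lemma exists_borelLE_of_mem_minGens (hu : u ∈ minGens (borelIdeal W)) :
    ∃ w ∈ W, BorelLE w u ∧ degree u = degree w := by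
  obtain ⟨⟨w, hw, hwu⟩, hmin⟩ := hu
  refine ⟨w, hw, hwu, hwu.degree_le.antisymm' (not_lt.1 fun hlt => ?_)⟩
  obtain ⟨v, hvu, hwv⟩ := hwu.exists_lt hlt
  exact hvu.ne (hmin v ⟨w, hw, hwv⟩ hvu.le)

lemma mem_gens_borelIdeal (hw : w ∈ W) (hmin : ∀ v ∈ W, BorelLE v w → degree w ≤ degree v) :
    w ∈ gens (borelIdeal W) (degree w) := by
  refine ⟨⟨⟨w, hw, .of_le le_rfl⟩, ?_⟩, rfl⟩
  rintro u ⟨v, hv, hvu⟩ huw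
  have hwv : degree w ≤ degree v := hmin v hv (hvu.trans (.of_le huw))
  exact eq_of_le_of_degree_le huw (hwv.trans hvu.degree_le)

lemma corners_borelIdeal_image {C : Set (ℕ × ℕ)} {g : ℕ × ℕ → Mon n}
    (hC : IsAntichain (· ≤ ·) C) (hpos : ∀ c ∈ C, 1 ≤ c.1 ∧ 1 ≤ c.2)
    (hdeg : ∀ c ∈ C, degree (g c) = c.2) (hmax : ∀ c ∈ C, maxVar (g c) = c.1 + 1)
    (hmin : ∀ c ∈ C, ∀ d ∈ C, BorelLE (g c) (g d) → d.2 ≤ c.2) :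
    corners (borelIdeal (g '' C)) = C := by
  have hgens : ∀ c ∈ C, g c ∈ gens (borelIdeal (g '' C)) c.2 := by
    intro c hc
    have := mem_gens_borelIdeal (Set.mem_image_of_mem g hc) <| by
      rintro _ ⟨d, hd, rfl⟩ hdc
      simpa only [hdeg _ hc, hdeg _ hd] using hmin d hd c hc hdc
    rwa [hdeg c hc] at this
  have hbound : ∀ b, ∀ u ∈ gens (borelIdeal (g '' C)) b,
      ∃ d ∈ C, d.2 = b ∧ maxVar u ≤ d.1 + 1 := by
    rintro b u ⟨hu, rfl⟩
    obtain ⟨_, ⟨d, hd, rfl⟩, hle, heq⟩ := exists_borelLE_of_mem_minGens hu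
    exact ⟨d, hd, by rw [heq, hdeg d hd], hmax d hd ▸ hle.maxVar_le heq⟩
  ext ⟨a, b⟩
  constructor
  · rintro ⟨-, -, ⟨u, hu, hua⟩, hle, -⟩
    obtain ⟨d, hd, rfl, hud⟩ := hbound b u hu
    have hda := hle _ (hgens d hd)
    rw [hmax d hd] at hda
    have : a = d.1 := by simp only at hua hda; omega
    rwa [this]
  · intro hc
    refine ⟨(hpos _ hc).1, (hpos _ hc).2, ⟨_, hgens _ hc, hmax _ hc⟩, ?_, ?_⟩
    · intro u hu
      obtain ⟨d, hd, hdb, hud⟩ := hbound b u hu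
      have hcd : (a, b) = d := by
        rcases le_total a d.1 with had | hda
        · exact hC.eq hc hd ⟨had, hdb.ge⟩
        · exact hC.eq' hc hd ⟨hda, hdb.le⟩
      simpa [← hcd] using hud
    · intro j hj u hu
      obtain ⟨d, hd, rfl, hud⟩ := hbound j u hu
      have hne : (a, b) ≠ d := by rintro rfl; exact hj.false
      have : ¬ a ≤ d.1 := fun had => hC hc hd hne ⟨had, hj.le⟩
      simp only
      omega

end BorelIdeal

section CornerGenerator

variable {n k l : ℕ}

/-- The monomial `x_2 x_3 ⋯ x_m`, equal to `1` if `m ≤ 1`. -/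
def staircase (n m : ℕ) : Mon n := ∑ q ∈ Finset.Icc 2 m, X n q

/-- The Borel generator producing the corner `(k, l)`. It is
`x_2 ⋯ x_{l-1} · x_{l-1} x_{k+1}` if `l ≤ k - 2`, and `x_2 ⋯ x_{k-1} · x_{k+1}^{l-k+2}` otherwise;
the truncated subtractions are harmless for `2 ≤ k` and `2 ≤ l`. -/
def cornerGen (n k l : ℕ) : Mon n :=
  if l + 2 ≤ k then staircase n (l - 1) + X n (l - 1) + X n (k + 1)
  else staircase n (k - 1) + (l - (k - 2)) • X n (k + 1)

lemma prefixDegree_staircase {m : ℕ} (hm : m ≤ n) (j : ℕ) :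
    prefixDegree (staircase n m) j = min j m - 1 := by
  have hfilter : (Finset.Icc 2 m).filter (· ≤ j) = Finset.Icc 2 (min j m) := by
    ext q
    simp only [Finset.mem_filter, Finset.mem_Icc]
    omega
  calc prefixDegree (staircase n m) j = ∑ q ∈ Finset.Icc 2 m, if q ≤ j then 1 else 0 := by
        rw [staircase, prefixDegree_sum]
        refine Finset.sum_congr rfl fun q hq => ?_
        rw [Finset.mem_Icc] at hq
        exact prefixDegree_X (by omega) (by omega) j
    _ = min j m - 1 := by
        rw [← Finset.card_filter, hfilter, Nat.card_Icc]
        omega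

lemma prefixDegree_cornerGen (hkn : k < n) (hl : 2 ≤ l) (j : ℕ) :
    prefixDegree (cornerGen n k l) j =
      if k < j then l else if l + 2 ≤ k ∧ l ≤ j + 1 then l - 1 else min j (k - 1) - 1 := by
  unfold cornerGen
  split_ifs <;>
    simp (disch := omega) only [prefixDegree_add, prefixDegree_nsmul, prefixDegree_staircase,
      prefixDegree_X] <;>
    grind

lemma degree_cornerGen (hkn : k < n) (hl : 2 ≤ l) :
    degree (cornerGen n k l) = l := by
  rw [← prefixDegree_self, prefixDegree_cornerGen hkn hl, if_pos hkn]

lemma maxVar_cornerGen (hkn : k < n) (hl : 2 ≤ l) :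
    maxVar (cornerGen n k l) = k + 1 := by
  have hle : maxVar (cornerGen n k l) ≤ k + 1 := by
    rw [← prefixDegree_eq_degree_iff, degree_cornerGen hkn hl,
      prefixDegree_cornerGen hkn hl, if_pos k.lt_succ_self]
  have hlt : ¬ maxVar (cornerGen n k l) ≤ k := by
    rw [← prefixDegree_eq_degree_iff, degree_cornerGen hkn hl,
      prefixDegree_cornerGen hkn hl]
    grind
  omega

/-- The two generators are told apart by their degrees in `x_1, …, x_{l-1}` if the first one is
of the first kind and `l - 1 ≤ k'`, and in `x_1, …, x_{k'}` otherwise. -/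
lemma not_borelLE_cornerGen {k' l' : ℕ} (hkn : k < n) (hk' : 2 ≤ k') (hkk' : k' < k)
    (hl : 2 ≤ l) (hll' : l < l') : ¬ BorelLE (cornerGen n k l) (cornerGen n k' l') := by
  intro h
  have hprefix : ∀ j, prefixDegree (cornerGen n k l) j ≤ prefixDegree (cornerGen n k' l') j := h
  simp (disch := omega) only [prefixDegree_cornerGen] at hprefix
  by_cases hsmall : l + 2 ≤ k ∧ l ≤ k' + 1
  · have := hprefix (l - 1)
    grind
  · have := hprefix k'
    grind

end CornerGenerator

theorem exists_stronglyStable_corners_eq {n d : ℕ} {C : Set (ℕ × ℕ)}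
    (hC : IsAntichain (· ≤ ·) C) (hbound : ∀ c ∈ C, 2 ≤ c.1 ∧ c.1 < n ∧ 2 ≤ c.2)
    (hd : IsLeast (Prod.snd '' C) d) :
    ∃ I : Set (Mon n), StronglyStable I ∧ initialDegree I d ∧ corners I = C := by
  let g : ℕ × ℕ → Mon n := fun c => cornerGen n c.1 c.2
  have hdeg : ∀ c ∈ C, degree (g c) = c.2 := fun c hc =>
    degree_cornerGen (hbound c hc).2.1 (hbound c hc).2.2
  have hmax : ∀ c ∈ C, maxVar (g c) = c.1 + 1 := fun c hc =>
    maxVar_cornerGen (hbound c hc).2.1 (hbound c hc).2.2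
  have hmin : ∀ c ∈ C, ∀ e ∈ C, BorelLE (g c) (g e) → e.2 ≤ c.2 := by
    intro c hc e he hle
    by_contra! hlt
    have hne : c ≠ e := by rintro rfl; exact hlt.false
    have hec : e.1 < c.1 := not_le.1 fun hce => hC hc he hne ⟨hce, hlt.le⟩
    exact not_borelLE_cornerGen (hbound c hc).2.1 (hbound e he).1 hec (hbound c hc).2.2 hlt hle
  refine ⟨borelIdeal (g '' C), stronglyStable_borelIdeal ?_, initialDegree_borelIdeal ?_,
    corners_borelIdeal_image hC ?_ hdeg hmax hmin⟩
  · rintro ⟨c, hc, hgc⟩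
    have := hdeg c hc
    rw [degree_eq_zero.2 hgc] at this
    have := (hbound c hc).2.2
    omega
  · rwa [Set.image_image, Set.image_congr hdeg]
  · intro c hc
    have := hbound c hc
    omega

lemma isAntichain_image_of_strictAntiOn_strictMonoOn {ι : Type*} [LinearOrder ι] {s : Set ι}
    {k l : ι → ℕ} (hk : StrictAntiOn k s) (hl : StrictMonoOn l s) :
    IsAntichain (· ≤ ·) ((fun i => (k i, l i)) '' s) := by
  rintro _ ⟨i, hi, rfl⟩ _ ⟨j, hj, rfl⟩ hne ⟨hkij, hlij⟩
  have hij : i ≤ j := (hl.le_iff_le hi hj).1 hlij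
  have hji : j ≤ i := (hk.le_iff_ge hi hj).1 hkij
  exact hne (by rw [hij.antisymm hji])

theorem statement4_general {n s : ℕ} {k l : ℕ → ℕ} (hs : 1 ≤ s)
    (hk1 : k 1 < n) (hks : 2 ≤ k s) (hl1 : 2 ≤ l 1)
    (hkdec : StrictAntiOn k (Set.Icc 1 s)) (hlinc : StrictMonoOn l (Set.Icc 1 s)) :
    ∃ I : Set (Mon n), StronglyStable I ∧ initialDegree I (l 1) ∧
      corners I = {c | ∃ i, 1 ≤ i ∧ i ≤ s ∧ c = (k i, l i)} := by
  have hone : 1 ∈ Set.Icc 1 s := ⟨le_rfl, hs⟩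
  have hrange : {c | ∃ i, 1 ≤ i ∧ i ≤ s ∧ c = (k i, l i)} =
      (fun i => (k i, l i)) '' Set.Icc 1 s := by
    ext c
    simp [and_assoc, eq_comm]
  rw [hrange]
  refine exists_stronglyStable_corners_eq
    (isAntichain_image_of_strictAntiOn_strictMonoOn hkdec hlinc) ?_ ?_
  · rintro _ ⟨i, hi, rfl⟩
    exact ⟨hks.trans (hkdec.antitoneOn hi ⟨hs, le_rfl⟩ hi.2),
      (hkdec.antitoneOn hone hi hi.1).trans_lt hk1, hl1.trans (hlinc.monotoneOn hone hi hi.1)⟩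
  · rw [Set.image_image]
    exact hlinc.monotoneOn.map_isLeast ⟨hone, fun i hi => hi.1⟩

lemma add_le_add_one_of_strictAntiOn {s : ℕ} {k : ℕ → ℕ} (hs : 1 ≤ s)
    (hk : StrictAntiOn k (Set.Icc 1 s)) : s + k s ≤ k 1 + 1 := by
  have hmaps : Set.MapsTo k (Finset.Icc 1 s : Set ℕ) (Finset.Icc (k s) (k 1)) := by
    intro i hi
    rw [Finset.coe_Icc] at hi ⊢
    exact ⟨hk.antitoneOn hi ⟨hs, le_rfl⟩ hi.2, hk.antitoneOn ⟨le_rfl, hs⟩ hi hi.1⟩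
  have hcard := Finset.card_le_card_of_injOn k hmaps (by simpa using hk.injOn)
  simp only [Nat.card_Icc] at hcard
  omega

/-- Let `n ≥ 4` and `(k_1,ℓ_1),…,(k_{n−2},ℓ_{n−2})` with
`n−1 ≥ k_1 > … > k_{n−2} ≥ 2` and `ℓ_1 = 2 < ℓ_2 < … < ℓ_{n−2}`. Then there is a
strongly stable ideal `I ⊊ S` of initial degree 2 whose set of corners is exactly
`{(k_i,ℓ_i)}` iff `k_1 + 1 = n`. -/
theorem statement4 (n : ℕ) (hn : 4 ≤ n) (k l : ℕ → ℕ)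
    (hk1 : k 1 ≤ n - 1) (hkr : 2 ≤ k (n - 2)) (hl1 : l 1 = 2)
    (hkdec : ∀ i j, 1 ≤ i → i < j → j ≤ n - 2 → k j < k i)
    (hlinc : ∀ i j, 1 ≤ i → i < j → j ≤ n - 2 → l i < l j) :
    (∃ I : Set (Mon n), StronglyStable I ∧ initialDegree I 2 ∧
        corners I = {c | ∃ i, 1 ≤ i ∧ i ≤ n - 2 ∧ c = (k i, l i)}) ↔
    k 1 + 1 = n := by
  have hkdec' : StrictAntiOn k (Set.Icc 1 (n - 2)) := fun i hi j hj hij =>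
    hkdec i j hi.1 hij hj.2
  have hlinc' : StrictMonoOn l (Set.Icc 1 (n - 2)) := fun i hi j hj hij =>
    hlinc i j hi.1 hij hj.2
  have hk : k 1 + 1 = n := by
    have := add_le_add_one_of_strictAntiOn (by omega) hkdec'
    omega
  exact iff_of_true
    (by simpa only [hl1] using
      statement4_general (by omega) (by omega) hkr hl1.ge hkdec' hlinc') hk

end ExtremalBetti
end

section
/- Let n ≥ 5, 2 < r ≤ n−2, and let (k_1,ℓ_1),…,(k_r,ℓ_r) be pairs with n−1 ≥ k_1 > … > k_r ≥ 2 and 2 = ℓ_1 < … < ℓ_r. Let B_1, B_2 be the first two associated sets of this corner sequence. If ℓ_2 ≤ r−2, then B_2 \ LexShad^{ℓ_2−2}(B_1) = {u ∈ A(k_2,ℓ_2) : x_{k_r}^{ℓ_2−1} x_{k_2+1} ≥_lex u ≥_lex x_{k_r} x_{k_{r−1}} ⋯ x_{k_{r−ℓ_2+3}} x_{k_{r−ℓ_2+2}−1} x_{k_2+1}}; if ℓ_2 > r−2, then B_2 \ LexShad^{ℓ_2−2}(B_1) = {u ∈ A(k_2,ℓ_2) : x_{k_r}^{ℓ_2−1}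 x_{k_2+1} ≥_lex u ≥_lex x_{k_r} x_{k_{r−1}} ⋯ x_{k_3} x_{k_2+1}^{ℓ_2−(r−2)}}. -/
namespace ExtremalBetti

/-!
For a monomial `u` divisible by `x_{c+1}` with `k_r ≤ c + 1 ≤ k_1`, two lexicographic conditions
both say that no variable before `x_{k_r}` divides `u`:

* `u` is strictly smaller than `x_{k_r-1} x_{k_1+1} x_n^t`: the two cannot agree up to position
  `c + 1`, where only `u` is nonzero, so their first difference is at the only nonzero exponent
  of the larger one before that position, the exponent of `x_{k_r-1}`;
* `u` is at most `x_{k_r}^{deg u - 1} x_{c+1}`: cancel `x_{c+1}`, and use that `x_{k_r}^d` is the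
  lex-largest monomial of degree `d` in the variables from `x_{k_r}` on.

As `x_{k_r-1} x_{k_1+1}` is the lex-smallest element of `B_1`, the first condition describes the
complement of the lexicographic shadow of `B_1`, and the second is the required upper bound.
-/

section LexOrder

variable {n : ℕ} {u v : Mon n}

theorem lexLE_iff_toLex_le : lexLE u v ↔ toLex u ≤ toLex v :=
  (le_iff_eq_or_lt (a := toLex u)).symm

theorem lexLE_antisymm (huv : lexLE u v) (hvu : lexLE v u) : u = v :=
  toLex.injective (le_antisymm (lexLE_iff_toLex_le.1 huv) (lexLE_iff_toLex_le.1 hvu))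

theorem not_lexLE : ¬ lexLE u v ↔ lexLT v u :=
  lexLE_iff_toLex_le.not.trans not_le

theorem lexLE_add_right (huv : lexLE u v) (w : Mon n) : lexLE (u + w) (v + w) := by
  rw [lexLE_iff_toLex_le] at huv ⊢
  exact add_le_add_left huv (toLex w)

theorem lexLE.apply_eq_zero {a : ℕ} (huv : lexLE u v) (hv : ∀ i : Fin n, (i : ℕ) < a → v i = 0)
    (i : Fin n) (hi : (i : ℕ) < a) : u i = 0 := by
  rcases huv with rfl | ⟨p, heq, hlt⟩
  · exact hv i hi
  · have hp : a ≤ p := by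
      by_contra! hpa
      exact absurd hlt (by simp [hv p hpa])
    rw [heq i (hi.trans_le hp), hv i hi]

end LexOrder

section Degree

variable {n : ℕ}

theorem degree_strictMono : StrictMono (degree : Mon n → ℕ) :=
  Fintype.sum_strictMono

theorem degree_add (u v : Mon n) : degree (u + v) = degree u + degree v :=
  Finset.sum_add_distrib

theorem degree_nsmul (m : ℕ) (u : Mon n) : degree (m • u) = m * degree u :=
  (Finset.mul_sum _ _ _).symm

theorem X_succ (i : Fin n) : X n (i + 1) = Pi.single i 1 := by
  ext j
  simp [X, Pi.single_apply, Fin.ext_iff]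

theorem degree_X_succ (i : Fin n) : degree (X n (i + 1)) = 1 := by
  simp [X_succ, degree]

end Degree

section MaxVar

variable {n : ℕ}

theorem apply_ne_zero_of_maxVar_eq {u : Mon n} {q : Fin n} (hu : maxVar u = q + 1) :
    u q ≠ 0 := by
  have hne : (Finset.univ.filter fun i => u i ≠ 0).Nonempty := by
    by_contra hempty
    simp [maxVar, Finset.not_nonempty_iff_eq_empty.1 hempty] at hu
  obtain ⟨i, hi, hsup⟩ := Finset.exists_mem_eq_sup _ hne fun i => (i : ℕ) + 1
  have hiq : i = q := Fin.ext (Nat.succ_injective (hsup.symm.trans hu))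
  exact hiq ▸ (Finset.mem_filter.1 hi).2

theorem maxVar_X_add_X {a : ℕ} {q : Fin n} (ha : a ≤ q + 1) :
    maxVar (X n a + X n (q + 1)) = q + 1 := by
  apply le_antisymm
  · refine Finset.sup_le fun i hi => ?_
    have hne := (Finset.mem_filter.1 hi).2
    simp only [X, Pi.add_apply] at hne
    split_ifs at hne <;> omega
  · exact Finset.le_sup (f := fun i : Fin n => (i : ℕ) + 1) (by simp [X])

end MaxVar

section LexBounds

variable {n a : ℕ} {u v : Mon n} {q : Fin n}

theorem lexLE_degree_nsmul_X (hv : ∀ i : Fin n, (i : ℕ) < a → v i = 0) :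
    lexLE v (degree v • X n (a + 1)) := by
  by_contra hgt
  obtain ⟨i, heq, hlt⟩ := not_lexLE.1 hgt
  have hai : a ≤ i := by
    by_contra! hia
    exact absurd hlt (by simp [hv i hia])
  have hle : degree v • X n (a + 1) ≤ v := fun j => by
    by_cases hja : (j : ℕ) = a
    · rcases (Fin.le_def.2 (hja.trans_le hai)).lt_or_eq with hji | rfl
      · exact (heq j hji).le
      · exact hlt.le
    · simp [X, hja]
  have hdeg := degree_strictMono (Pi.lt_def.2 ⟨hle, i, hlt⟩)
  rw [degree_nsmul, degree_X_succ ⟨a, hai.trans_lt i.isLt⟩, mul_one] at hdeg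
  exact hdeg.false

theorem lexLE_nsmul_X_add_X_iff {m : ℕ} (hu : degree u = m + 1) (huq : u q ≠ 0) (haq : a ≤ q) :
    lexLE u (m • X n (a + 1) + X n (q + 1)) ↔ ∀ i : Fin n, (i : ℕ) < a → u i = 0 := by
  constructor
  · intro hle
    refine hle.apply_eq_zero fun i hi => ?_
    simp [X, hi.ne, (hi.trans_le haq).ne]
  · intro hzero
    obtain ⟨v, rfl⟩ : ∃ v, u = v + X n (q + 1) := by
      refine ⟨u - Pi.single q 1, ?_⟩
      rw [X_succ, tsub_add_cancel_of_le]
      exact update_le_iff.2 ⟨Nat.one_le_iff_ne_zero.2 huq, fun _ _ => Nat.zero_le _⟩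
    have hv : degree v = m := by
      rw [degree_add, degree_X_succ] at hu
      exact Nat.succ_injective hu
    have hvzero : ∀ i : Fin n, (i : ℕ) < a → v i = 0 := fun i hi =>
      (Nat.add_eq_zero_iff.1 (hzero i hi)).1
    exact lexLE_add_right (hv ▸ lexLE_degree_nsmul_X hvzero) _

theorem lexLT_X_add_iff {p : Fin n} (hpq : p < q) (hv : ∀ i ≤ q, v i = 0) (huq : u q ≠ 0) :
    lexLT u (X n (p + 1) + v) ↔ ∀ i ≤ p, u i = 0 := by
  have hX : ∀ i ≤ q, (X n (p + 1) + v) i = (Pi.single p 1 : Mon n) i := fun i hi => by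
    rw [X_succ, Pi.add_apply, hv i hi, add_zero]
  constructor
  · rintro ⟨i, heq, hlt⟩
    have hiq : i ≤ q := by
      by_contra! hqi
      exact huq ((heq q hqi).trans (by simp [hX, hpq.ne']))
    obtain rfl : i = p := by
      by_contra hip
      simp [hX i hiq, hip] at hlt
    intro j hj
    rcases hj.lt_or_eq with hji | rfl
    · simp [heq j hji, hX j (hji.le.trans hiq), hji.ne]
    · simpa [hX j hiq] using hlt
  · intro hzero
    refine ⟨p, fun j hj => ?_, ?_⟩
    · simp [hzero j hj.le, hX j (hj.trans hpq).le, hj.ne]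
    · simp [hzero p le_rfl, hX p hpq.le]

end LexBounds

section LexShad

variable {n : ℕ}

theorem mem_lexShad_iff {Ms : Set (Mon n)} {w : Mon n} (hw : w ∈ Ms)
    (hmin : ∀ v ∈ Ms, lexLE w v) {t : ℕ} {u : Mon n} :
    u ∈ lexShad t Ms ↔ degree u = degree w + t ∧ lexLE (w + t • X n n) u := by
  constructor
  · rintro ⟨w', hw', hmin', hdeg, -, hle⟩
    obtain rfl : w' = w := lexLE_antisymm (hmin' w hw) (hmin w' hw')
    exact ⟨hdeg, hle⟩
  · rintro ⟨hdeg, hle⟩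
    exact ⟨w, hw, hmin, hdeg, hdeg ▸ lexLE_degree_nsmul_X (by simp), hle⟩

theorem notMem_lexShad_iff {a b c d : ℕ} (hd : 2 ≤ d) (ha : 2 ≤ a) (hac : a ≤ c + 1) (hcb : c < b)
    (hbn : b < n) {u : Mon n} (hu : u ∈ A n c d) :
    u ∉ lexShad (d - 2) {w ∈ A n b 2 | lexLE (X n (a - 1) + X n (b + 1)) w} ↔
      lexLE u ((d - 1) • X n a + X n (c + 1)) := by
  obtain ⟨hdeg, hmax⟩ := hu
  obtain ⟨a, rfl⟩ := Nat.exists_eq_add_of_le' ha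
  let p : Fin n := ⟨a, by omega⟩
  let q : Fin n := ⟨c, hcb.trans hbn⟩
  have hpq : p < q := Nat.succ_le_succ_iff.1 hac
  have huq : u q ≠ 0 := apply_ne_zero_of_maxVar_eq hmax
  have hdegw : degree (X n (a + 1) + X n (b + 1)) = 2 := by
    rw [degree_add, degree_X_succ p, degree_X_succ ⟨b, hbn⟩]
  have hmem : X n (a + 1) + X n (b + 1) ∈
      {w ∈ A n b 2 | lexLE (X n (a + 1) + X n (b + 1)) w} :=
    ⟨⟨hdegw, maxVar_X_add_X (q := ⟨b, hbn⟩) (Nat.succ_le_succ (by omega : a ≤ b))⟩,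
      Or.inl rfl⟩
  have hzero : ∀ i ≤ q, (X n (b + 1) + (d - 2) • X n n) i = 0 := fun i hi => by
    have hic : (i : ℕ) ≤ c := hi
    simp [X, show (i : ℕ) ≠ b by omega, show (i : ℕ) + 1 ≠ n by omega]
  calc u ∉ lexShad (d - 2) {w ∈ A n b 2 | lexLE (X n (a + 1) + X n (b + 1)) w}
      ↔ lexLT u (X n (p + 1) + (X n (b + 1) + (d - 2) • X n n)) := by
        rw [mem_lexShad_iff hmem fun _ hw => hw.2, hdegw, Nat.add_sub_cancel' hd,
          and_iff_right hdeg, not_lexLE, add_assoc]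
    _ ↔ ∀ i ≤ p, u i = 0 := lexLT_X_add_iff hpq hzero huq
    _ ↔ ∀ i : Fin n, (i : ℕ) < a + 1 → u i = 0 := by simp only [Nat.lt_succ_iff, Fin.le_def, p]
    _ ↔ lexLE u ((d - 1) • X n (a + 2) + X n (q + 1)) :=
        (lexLE_nsmul_X_add_X_iff (by omega) huq hpq).symm

theorem sep_lexLE_diff_lexShad {a b c d : ℕ} (hd : 2 ≤ d) (ha : 2 ≤ a) (hac : a ≤ c + 1)
    (hcb : c < b) (hbn : b < n) (v : Mon n) :
    {u ∈ A n c d | lexLE v u} \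
        lexShad (d - 2) {w ∈ A n b 2 | lexLE (X n (a - 1) + X n (b + 1)) w} =
      {u ∈ A n c d | lexLE u ((d - 1) • X n a + X n (c + 1)) ∧ lexLE v u} := by
  ext u
  rw [Set.mem_sdiff, Set.mem_sep_iff, Set.mem_sep_iff, and_assoc]
  refine and_congr_right fun hu => ?_
  rw [notMem_lexShad_iff hd ha hac hcb hbn hu, and_comm]

end LexShad

section AssociatedSets

variable {n s p : ℕ} {k l : ℕ → ℕ}

theorem le_tVal_iff (hl : MonotoneOn l (Set.Icc 1 s)) (hp : p ∈ Set.Icc 1 s) :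
    p ≤ tVal s l ↔ l p ≤ s - p := by
  constructor
  · intro hle
    obtain ⟨j, hj, hpj : p ≤ j⟩ := (Finset.le_sup_iff hp.1).1 hle
    rw [Finset.mem_filter, Finset.mem_Icc] at hj
    exact (hl hp hj.1 hpj).trans (hj.2.trans (Nat.sub_le_sub_left hpj s))
  · intro hle
    exact Finset.le_sup (f := id) (Finset.mem_filter.2 ⟨Finset.mem_Icc.2 hp, hle⟩)

theorem assocB_one (hs : 2 < s) (hl : l 1 = 2) :
    assocB n s k l 1 = {u ∈ A n (k 1) 2 | lexLE (X n (k s - 1) + X n (k 1 + 1)) u} := by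
  simp only [assocB, hl, and_self, if_true]
  rw [if_neg one_ne_zero, if_neg (by omega), if_neg (by omega), if_neg (by omega)]

theorem assocB_of_le_tVal (hp : 1 < p) (hps : p < s) (ht : p ≤ tVal s l) :
    assocB n s k l p = {u ∈ A n (k p) (l p) |
      lexLE ((∑ j ∈ Finset.Icc (s - l p + 3) s, X n (k j)) +
        X n (k (s - l p + 2) - 1) + X n (k p + 1)) u} := by
  rw [assocB, if_neg (by omega), if_neg (by omega), if_neg hps.ne, if_neg (by omega), if_pos ht]

theorem assocB_of_tVal_lt (hp : 1 < p) (hps : p < s) (ht : tVal s l < p) :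
    assocB n s k l p = {u ∈ A n (k p) (l p) |
      lexLE ((∑ j ∈ Finset.Icc (p + 1) s, X n (k j)) + (l p - (s - p)) • X n (k p + 1)) u} := by
  rw [assocB, if_neg (by omega), if_neg (by omega), if_neg hps.ne, if_neg (by omega),
    if_neg ht.not_ge]

end AssociatedSets

/-- With the setting of Statement 9 and `B_1, B_2` the first two
associated sets: if `ℓ_2 ≤ r−2`, then `B_2 \ LexShad^{ℓ_2−2}(B_1)` is the set of
`u ∈ A(k_2,ℓ_2)` with `x_{k_r}^{ℓ_2−1} x_{k_2+1} ≥_lex u ≥_lex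
x_{k_r} ⋯ x_{k_{r−ℓ_2+3}} x_{k_{r−ℓ_2+2}−1} x_{k_2+1}`; if `ℓ_2 > r−2`, then it is
the set of `u ∈ A(k_2,ℓ_2)` with `x_{k_r}^{ℓ_2−1} x_{k_2+1} ≥_lex u ≥_lex
x_{k_r} ⋯ x_{k_3} x_{k_2+1}^{ℓ_2−(r−2)}`. -/
theorem statement11 (n r : ℕ) (hn : 5 ≤ n) (hr2 : 2 < r) (hr : r ≤ n - 2)
    (k l : ℕ → ℕ)
    (hk1 : k 1 ≤ n - 1) (hkr : 2 ≤ k r) (hl1 : l 1 = 2)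
    (hkdec : ∀ i j, 1 ≤ i → i < j → j ≤ r → k j < k i)
    (hlinc : ∀ i j, 1 ≤ i → i < j → j ≤ r → l i < l j) :
    (l 2 ≤ r - 2 →
      assocB n r k l 2 \ lexShad (l 2 - 2) (assocB n r k l 1) =
        {u ∈ A n (k 2) (l 2) |
          lexLE u ((l 2 - 1) • X n (k r) + X n (k 2 + 1)) ∧
          lexLE ((∑ j ∈ Finset.Icc (r - l 2 + 3) r, X n (k j)) +
              X n (k (r - l 2 + 2) - 1) + X n (k 2 + 1)) u}) ∧
    (r - 2 < l 2 →
      assocB n r k l 2 \ lexShad (l 2 - 2) (assocB n r k l 1) =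
        {u ∈ A n (k 2) (l 2) |
          lexLE u ((l 2 - 1) • X n (k r) + X n (k 2 + 1)) ∧
          lexLE ((∑ j ∈ Finset.Icc 3 r, X n (k j)) +
              (l 2 - (r - 2)) • X n (k 2 + 1)) u}) := by
  have hk21 : k 2 < k 1 := hkdec 1 2 le_rfl one_lt_two hr2.le
  have hkr2 : k r < k 2 := hkdec 2 r one_le_two hr2 le_rfl
  have hl2 : 2 < l 2 := hl1 ▸ hlinc 1 2 le_rfl one_lt_two hr2.le
  have hlmono : StrictMonoOn l (Set.Icc 1 r) := fun i hi j hj hij => hlinc i j hi.1 hij hj.2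
  have htVal : 2 ≤ tVal r l ↔ l 2 ≤ r - 2 := le_tVal_iff hlmono.monotoneOn ⟨one_le_two, hr2.le⟩
  have hdiff := sep_lexLE_diff_lexShad hl2.le hkr (by omega) hk21 (by omega : k 1 < n)
  rw [assocB_one hr2 hl1]
  constructor
  · intro hle
    rw [assocB_of_le_tVal one_lt_two hr2 (htVal.2 hle)]
    exact hdiff _
  · intro hlt
    rw [assocB_of_tVal_lt one_lt_two hr2 (not_le.1 (htVal.not.2 hlt.not_ge))]
    exact hdiff _

end ExtremalBetti
end
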